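/- (Infinitesimal form of Theorem 6.6.) Let G be a finite simple graph with |E| = 3|V| − 6, let C ∈ O(3) be a half-turn (an orthogonal involution of ℝ³ with determinant 1 whose fixed subspace is 1-dimensional), S = {I, C}, and let Φ : S → Aut(G) be a homomorphism such that Φ(C) has no fixed vertex and fixes no edge setwise. Then every S-symmetric framework (G,p) of type Φ in ℝ³ whose points p_i affinely span ℝ³ has a fully (S,Φ)-symmetric infinitesimal flex, i.e., a fully (S,Φ)-symmetric infinitesimal motion that is not an infinitesimal rigid motion. -/

import Mathlib

open scoped Classical

noncomputable section

abbrev Euc (d : ℕ) : Type := EuclideanSpace ℝ (Fin d)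

/-- The subspace of points of `ℝ^d` fixed by a linear isometry (orthogonal transformation). -/
def fixedSpace {d : ℕ} (x : Euc d ≃ₗᵢ[ℝ] Euc d) : Submodule ℝ (Euc d) :=
  LinearMap.ker (x.toLinearEquiv.toLinearMap - LinearMap.id)

/-!
Since the involution moves every vertex and every edge, a fully symmetric velocity field is
determined by its values on half of the vertices, and it stretches the two edges of an orbit
equally, so only half of the edges impose conditions. In dimension `d` this leaves at least
`(d|V| - |E|) / 2` dimensions of fully symmetric motions. By averaging over the group, a fully
symmetric rigid motion can be written `x ↦ A x + t` with `A` commuting with `C` and `t` fixed by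
`C`; as `A` then preserves the fixed space of `C`, of dimension `k` say, these motions span at most
`(d - k).choose 2 + k.choose 2 + k` dimensions. For a half-turn in space and `|E| = 3|V| - 6` the
two numbers are `3` and `2`.
-/

open Module LinearMap
open scoped RealInnerProductSpace

section EquivariantMaps

variable {X : Type*} {τ : X → X}

theorem exists_finset_two_mul_card_eq_and_mem_iff [Fintype X] (hτ : Function.Involutive τ)
    (hfree : ∀ x, τ x ≠ x) :
    ∃ R : Finset X, 2 * R.card = Fintype.card X ∧ ∀ x, x ∈ R ↔ τ x ∉ R := by
  let e := Fintype.equivFin X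
  let R : Finset X := Finset.univ.filter fun x ↦ e x < e (τ x)
  have hR (x : X) : x ∈ R ↔ τ x ∉ R := by
    have hne : e x ≠ e (τ x) := e.injective.ne (hfree x).symm
    simp only [R, Finset.mem_filter_univ, hτ x, not_lt]
    exact hne.le_iff_lt.symm
  have hcompl : R.card = Rᶜ.card :=
    Finset.card_bij' (fun x _ ↦ τ x) (fun x _ ↦ τ x)
      (fun x hx ↦ Finset.mem_compl.2 ((hR x).1 hx))
      (fun x hx ↦ by rw [hR, hτ]; exact Finset.mem_compl.1 hx)
      (fun x _ ↦ hτ x) (fun x _ ↦ hτ x)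
  exact ⟨R, by rw [← R.card_add_card_compl, ← hcompl, two_mul], hR⟩

variable {K M : Type*} [DivisionRing K] [AddCommGroup M] [Module K M] {T : M →ₗ[K] M}

/-- The space of maps `u : X → M` intertwining `τ` and `T`. For `X` the vertex set and `T` an
orthogonal transformation these are the fully symmetric velocity fields; for `X` the edge set and
`T` the identity, the functions that are constant on edge orbits. -/
def equivariantMaps (τ : X → X) (T : M →ₗ[K] M) : Submodule K (X → M) where
  carrier := {u | ∀ x, T (u x) = u (τ x)}
  add_mem' hu hv x := by simp [hu x, hv x]
  zero_mem' x := by simp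
  smul_mem' a u hu x := by simp [hu x]

theorem bijective_restrict_equivariantMaps (hτ : Function.Involutive τ)
    (hT : Function.Involutive T) {R : Finset X} (hR : ∀ x, x ∈ R ↔ τ x ∉ R) :
    Function.Bijective
      ((funLeft K M ((↑) : R → X)).domRestrict (equivariantMaps τ T)) := by
  have hmem {x : X} (hx : x ∉ R) : τ x ∈ R := by rwa [hR, hτ]
  constructor
  · rintro ⟨u, hu⟩ ⟨v, hv⟩ huv
    have heq {x : X} (hx : x ∈ R) : u x = v x := congrFun huv ⟨x, hx⟩
    ext x
    by_cases hx : x ∈ R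
    · exact heq hx
    · change u x = v x
      rw [← hτ x, ← hu, ← hv, heq (hmem hx)]
  · intro f
    let u : X → M := fun x ↦ if hx : x ∈ R then f ⟨x, hx⟩ else T (f ⟨τ x, hmem hx⟩)
    have hu : u ∈ equivariantMaps τ T := by
      intro x
      by_cases hx : x ∈ R
      · simp [u, hx, (hR x).1 hx, hτ x]
      · simp [u, hx, hmem hx, hT _]
    refine ⟨⟨u, hu⟩, funext fun x ↦ ?_⟩
    simp [u, funLeft_apply]

theorem two_mul_finrank_equivariantMaps [Fintype X] [FiniteDimensional K M]
    (hτ : Function.Involutive τ) (hfree : ∀ x, τ x ≠ x) (hT : Function.Involutive T) :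
    2 * finrank K (equivariantMaps τ T) = Fintype.card X * finrank K M := by
  obtain ⟨R, hcard, hR⟩ := exists_finset_two_mul_card_eq_and_mem_iff hτ hfree
  rw [(LinearEquiv.ofBijective _ (bijective_restrict_equivariantMaps hτ hT hR)).finrank_eq,
    finrank_pi_fintype, Finset.sum_const, Finset.card_univ, Fintype.card_coe, smul_eq_mul,
    ← mul_assoc, hcard]

end EquivariantMaps

section Frameworks

variable {V E : Type*} [NormedAddCommGroup E] [InnerProductSpace ℝ E]

section SymmetricMotions

variable (G : SimpleGraph V) (p : V → E)

/-- The linear map given by the rigidity matrix of the framework `(G, p)`: it sends a velocity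
field to the rates of change of half the squared edge lengths. -/
def rigidityMap : (V → E) →ₗ[ℝ] (G.edgeSet → ℝ) where
  toFun u e := Sym2.lift ⟨fun i j ↦ ⟪p i - p j, u i - u j⟫, fun i j ↦ by
    simp only [← inner_neg_neg (p i - p j), neg_sub]⟩ e.1
  map_add' u v := by
    ext ⟨⟨i, j⟩, _⟩
    simp [← inner_add_right, add_sub_add_comm]
  map_smul' a u := by
    ext ⟨⟨i, j⟩, _⟩
    simp [← inner_smul_right, smul_sub]

variable {G p}

theorem mem_ker_rigidityMap {u : V → E} :
    u ∈ ker (rigidityMap G p) ↔ ∀ i j, G.Adj i j → ⟪p i - p j, u i - u j⟫ = 0 := by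
  refine ⟨fun hu i j h ↦ congrFun hu ⟨s(i, j), h⟩, fun hu ↦ ?_⟩
  ext ⟨⟨i, j⟩, h⟩
  exact hu i j h

variable {C : E ≃ₗᵢ[ℝ] E} {σ : G ≃g G}

theorem rigidityMap_mem_equivariantMaps (hsym : ∀ i, C (p i) = p (σ i)) {u : V → E}
    (hu : u ∈ equivariantMaps σ C.toLinearEquiv.toLinearMap) :
    rigidityMap G p u ∈ equivariantMaps σ.mapEdgeSet (LinearMap.id : ℝ →ₗ[ℝ] ℝ) := by
  rintro ⟨⟨i, j⟩, h⟩
  have hu' (i : V) : C (u i) = u (σ i) := hu i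
  change ⟪p i - p j, u i - u j⟫ = ⟪p (σ i) - p (σ j), u (σ i) - u (σ j)⟫
  rw [← hsym, ← hsym, ← hu', ← hu', ← map_sub, ← map_sub, C.inner_map_map]

/-- The fully symmetric infinitesimal motions of `(G, p)` for the symmetry `C` acting on `G`
through `σ`. -/
def symmetricMotions (G : SimpleGraph V) (p : V → E) (C : E ≃ₗᵢ[ℝ] E) (σ : G ≃g G) :
    Submodule ℝ (V → E) :=
  equivariantMaps σ C.toLinearEquiv.toLinearMap ⊓ ker (rigidityMap G p)

theorem mapEdgeSet_involutive (hσ : Function.Involutive σ) :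
    Function.Involutive σ.mapEdgeSet := by
  rintro ⟨⟨i, j⟩, h⟩
  exact Subtype.ext (congrArg₂ (fun a b ↦ s(a, b)) (hσ i) (hσ j))

theorem card_mul_finrank_le_card_edgeSet_add_two_mul_finrank_symmetricMotions
    [Fintype V] [Fintype G.edgeSet] [FiniteDimensional ℝ E]
    (hC : Function.Involutive C) (hσ : Function.Involutive σ) (hvertex : ∀ i, σ i ≠ i)
    (hedge : ∀ e, σ.mapEdgeSet e ≠ e) (hsym : ∀ i, C (p i) = p (σ i)) :
    Fintype.card V * finrank ℝ E ≤
      Fintype.card G.edgeSet + 2 * finrank ℝ (symmetricMotions G p C σ) := by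
  let ρ := (rigidityMap G p).restrict fun _ hu ↦ rigidityMap_mem_equivariantMaps hsym hu
  have hker : finrank ℝ (ker ρ) = finrank ℝ (symmetricMotions G p C σ) := by
    rw [ker_restrict, ← Submodule.finrank_map_subtype_eq,
      Submodule.map_comap_subtype, symmetricMotions]
  have hnullity := ρ.finrank_range_add_finrank_ker
  have hrange := (range ρ).finrank_le
  have hdomain : 2 * finrank ℝ (equivariantMaps σ C.toLinearEquiv.toLinearMap) = _ :=
    two_mul_finrank_equivariantMaps hσ hvertex hC
  have hcodomain :
      2 * finrank ℝ (equivariantMaps σ.mapEdgeSet (LinearMap.id : ℝ →ₗ[ℝ] ℝ)) = _ :=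
    two_mul_finrank_equivariantMaps (mapEdgeSet_involutive hσ) hedge fun _ ↦ rfl
  rw [finrank_self, mul_one] at hcodomain
  lia

end SymmetricMotions

section SkewAdjoint

/-- The entries above the diagonal of the matrix of an endomorphism with respect to an
orthonormal family `b`. -/
def upperEntries {ι : Type*} [LinearOrder ι] (b : ι → E) :
    End ℝ E →ₗ[ℝ] ({x : ι × ι // x.1 < x.2} → ℝ) where
  toFun A x := ⟪b x.1.1, A (b x.1.2)⟫
  map_add' A B := by ext; simp [inner_add_right]
  map_smul' a A := by ext; simp [inner_smul_right]

variable [FiniteDimensional ℝ E] {A : End ℝ E}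

theorem inner_apply_eq_neg_of_mem_skewAdjoint (hA : A ∈ skewAdjoint (End ℝ E)) (x y : E) :
    ⟪x, A y⟫ = -⟪y, A x⟫ := by
  rw [← adjoint_inner_left, ← star_eq_adjoint, skewAdjoint.mem_iff.1 hA, LinearMap.neg_apply,
    inner_neg_left, real_inner_comm]

theorem inner_apply_eq_zero_of_upperEntries_eq_zero {ι : Type*} [LinearOrder ι] {b : ι → E}
    (hA : A ∈ skewAdjoint (End ℝ E)) (h : upperEntries b A = 0) {x y : E}
    (hx : x ∈ Submodule.span ℝ (Set.range b)) (hy : y ∈ Submodule.span ℝ (Set.range b)) :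
    ⟪x, A y⟫ = 0 := by
  have hlt {i j : ι} (hij : i < j) : ⟪b i, A (b j)⟫ = 0 := congrFun h ⟨(i, j), hij⟩
  have hentry (i j : ι) : ⟪b i, A (b j)⟫ = 0 := by
    rcases lt_trichotomy i j with hij | rfl | hji
    · exact hlt hij
    · exact self_eq_neg.1 (inner_apply_eq_neg_of_mem_skewAdjoint hA _ _)
    · rw [inner_apply_eq_neg_of_mem_skewAdjoint hA, hlt hji, neg_zero]
  induction hx, hy using Submodule.span_induction₂ with
  | mem_mem x y hx hy =>
    obtain ⟨i, rfl⟩ := hx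
    obtain ⟨j, rfl⟩ := hy
    exact hentry i j
  | zero_left => simp
  | zero_right => simp
  | add_left => simp_all [inner_add_left]
  | add_right => simp_all [inner_add_right]
  | smul_left => simp_all [inner_smul_left]
  | smul_right => simp_all [inner_smul_right]

theorem eq_zero_of_upperEntries_eq_zero {ι κ : Type*} [LinearOrder ι] [LinearOrder κ]
    {b : ι → E} {c : κ → E} {F : Submodule ℝ E} (hb : Submodule.span ℝ (Set.range b) = F)
    (hc : Submodule.span ℝ (Set.range c) = Fᗮ) (hA : A ∈ skewAdjoint (End ℝ E))
    (hAF : A ∈ F.compatibleMaps F) (hAb : upperEntries b A = 0) (hAc : upperEntries c A = 0) :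
    A = 0 := by
  have hF {x y : E} (hx : x ∈ F) (hy : y ∈ F) : ⟪x, A y⟫ = 0 :=
    inner_apply_eq_zero_of_upperEntries_eq_zero hA hAb (hb ▸ hx) (hb ▸ hy)
  have hF' {x y : E} (hx : x ∈ Fᗮ) (hy : y ∈ Fᗮ) : ⟪x, A y⟫ = 0 :=
    inner_apply_eq_zero_of_upperEntries_eq_zero hA hAc (hc ▸ hx) (hc ▸ hy)
  have hAF' {y : E} (hy : y ∈ Fᗮ) : A y ∈ Fᗮ := fun x hx ↦ by
    rw [inner_apply_eq_neg_of_mem_skewAdjoint hA, F.inner_left_of_mem_orthogonal (hAF hx) hy,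
      neg_zero]
  ext z
  obtain ⟨x, hx, y, hy, rfl⟩ := F.exists_add_mem_mem_orthogonal z
  rw [map_add, inner_self_eq_zero.1 (hF (hAF hx) hx), inner_self_eq_zero.1 (hF' (hAF' hy) hy),
    add_zero, LinearMap.zero_apply]

theorem finrank_skewAdjoint_inf_compatibleMaps_le (F : Submodule ℝ E) :
    finrank ℝ ↥(skewAdjoint.submodule ℝ (End ℝ E) ⊓ F.compatibleMaps F) ≤
      (finrank ℝ F).choose 2 + (finrank ℝ Fᗮ).choose 2 := by
  let b : Fin (finrank ℝ F) → E := fun i ↦ stdOrthonormalBasis ℝ F i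
  let c : Fin (finrank ℝ Fᗮ) → E := fun i ↦ stdOrthonormalBasis ℝ Fᗮ i
  have hspan (W : Submodule ℝ E) :
      Submodule.span ℝ (Set.range fun i ↦ (stdOrthonormalBasis ℝ W i : E)) = W := by
    have h := congrArg (Submodule.map W.subtype) (stdOrthonormalBasis ℝ W).toBasis.span_eq
    rwa [Submodule.map_span, ← Set.range_comp, Submodule.map_subtype_top,
      OrthonormalBasis.coe_toBasis] at h
  let entries := ((upperEntries b).prod (upperEntries c)).domRestrict
    (skewAdjoint.submodule ℝ (End ℝ E) ⊓ F.compatibleMaps F)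
  have hentries : Function.Injective entries := by
    refine (injective_iff_map_eq_zero _).2 fun ⟨A, hA, hAF⟩ h ↦ Subtype.ext ?_
    exact eq_zero_of_upperEntries_eq_zero (hspan F) (hspan Fᗮ) hA hAF
      (congrArg Prod.fst h) (congrArg Prod.snd h)
  have hcard (n : ℕ) : Fintype.card {x : Fin n × Fin n // x.1 < x.2} = n.choose 2 := by
    rw [Fintype.card_subtype, Fintype.card_product_filter_lt, Fintype.card_fin]
  calc _ ≤ _ := finrank_le_finrank_of_injective hentries
    _ = _ := by rw [finrank_prod, finrank_fintype_fun_eq_card, finrank_fintype_fun_eq_card,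
      hcard, hcard]

end SkewAdjoint

section RigidMotions

variable {C : E ≃ₗᵢ[ℝ] E}

theorem half_smul_add_map_mem_ker_sub_id (hC : Function.Involutive C) (x : E) :
    (2⁻¹ : ℝ) • (x + C x) ∈ ker (C.toLinearEquiv.toLinearMap - LinearMap.id) := by
  change C ((2⁻¹ : ℝ) • (x + C x)) - (2⁻¹ : ℝ) • (x + C x) = 0
  rw [map_smul, map_add, hC, add_comm, sub_self]

variable [FiniteDimensional ℝ E] {p : V → E}

/-- The infinitesimal rigid motions `i ↦ A (p i) + t` of the points `p` with `A` skew-adjoint and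
preserving `F`, and `t ∈ F`. For `F` the fixed space of an involution `C`, every fully symmetric
rigid motion of a `C`-symmetric framework is of this kind. -/
def rigidMotionsPreserving (p : V → E) (F : Submodule ℝ E) : Submodule ℝ (V → E) :=
  (skewAdjoint.submodule ℝ (End ℝ E) ⊓ F.compatibleMaps F).map
      (LinearMap.pi fun i ↦ LinearMap.applyₗ (p i)) ⊔
    F.map (LinearMap.pi fun _ ↦ LinearMap.id)

theorem mem_rigidMotionsPreserving_of_forall_eq {F : Submodule ℝ E} {u : V → E}
    {A : End ℝ E} {t : E} (hA : A ∈ skewAdjoint (End ℝ E)) (hAF : ∀ x ∈ F, A x ∈ F) (ht : t ∈ F)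
    (hu : ∀ i, u i = A (p i) + t) : u ∈ rigidMotionsPreserving p F :=
  Submodule.mem_sup.2 ⟨_, Submodule.mem_map_of_mem ⟨hA, hAF⟩, _, Submodule.mem_map_of_mem ht,
    funext fun i ↦ (hu i).symm⟩

theorem finrank_rigidMotionsPreserving_le (p : V → E) (F : Submodule ℝ E) :
    finrank ℝ (rigidMotionsPreserving p F) ≤
      (finrank ℝ F + 1).choose 2 + (finrank ℝ E - finrank ℝ F).choose 2 := by
  have horth : finrank ℝ Fᗮ = finrank ℝ E - finrank ℝ F := by
    rw [← F.finrank_add_finrank_orthogonal, Nat.add_sub_cancel_left]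
  rw [Nat.choose_succ_succ' _ 1, Nat.choose_one_right, ← horth, add_assoc,
    add_comm (finrank ℝ F)]
  exact (Submodule.finrank_add_le_finrank_add_finrank _ _).trans <| add_le_add
    ((Submodule.finrank_map_le _ _).trans (finrank_skewAdjoint_inf_compatibleMaps_le F))
    (Submodule.finrank_map_le _ _)

theorem isSelfAdjoint_toLinearMap_of_involutive (hC : Function.Involutive C) :
    IsSelfAdjoint (C.toLinearEquiv.toLinearMap : End ℝ E) := by
  refine (isSymmetric_iff_isSelfAdjoint _).1 fun x y ↦ ?_
  change ⟪C x, y⟫ = ⟪x, C y⟫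
  rw [← C.inner_map_map, hC]

theorem mem_rigidMotionsPreserving_of_mem_equivariantMaps {σ : V → V}
    (hC : Function.Involutive C) (hsym : ∀ i, C (p i) = p (σ i)) {u : V → E}
    (hu : u ∈ equivariantMaps σ C.toLinearEquiv.toLinearMap) {A : End ℝ E}
    (hA : A ∈ skewAdjoint (End ℝ E)) {t : E} (hAt : ∀ i, u i = A (p i) + t) :
    u ∈ rigidMotionsPreserving p (ker (C.toLinearEquiv.toLinearMap - LinearMap.id)) := by
  let c : End ℝ E := C.toLinearEquiv.toLinearMap
  have hcAc : c * A * c ∈ skewAdjoint (End ℝ E) := by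
    simpa only [c, (isSelfAdjoint_toLinearMap_of_involutive hC).star_eq] using
      skewAdjoint.conjugate hA c
  have hconj (i : V) : u i = C (A (C (p i))) + C t := by
    have hui : C (u i) = u (σ i) := hu i
    rw [hsym, ← map_add, ← hAt, ← hui, hC]
  refine mem_rigidMotionsPreserving_of_forall_eq (A := (2⁻¹ : ℝ) • (A + c * A * c))
    (t := (2⁻¹ : ℝ) • (t + C t)) (skewAdjoint.smul_mem _ (add_mem hA hcAc)) (fun x hx ↦ ?_)
    (half_smul_add_map_mem_ker_sub_id hC t) fun i ↦ ?_
  · have hCx : C x = x := sub_eq_zero.1 hx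
    change (2⁻¹ : ℝ) • (A x + C (A (C x))) ∈ _
    rw [hCx]
    exact half_smul_add_map_mem_ker_sub_id hC (A x)
  · change u i = (2⁻¹ : ℝ) • (A (p i) + C (A (C (p i)))) + (2⁻¹ : ℝ) • (t + C t)
    rw [← smul_add, add_add_add_comm, ← hAt, ← hconj, ← two_smul ℝ, inv_smul_smul₀ two_ne_zero]

end RigidMotions

theorem stmt_11_general [FiniteDimensional ℝ E] [Fintype V] (G : SimpleGraph V)
    [Fintype G.edgeSet] (C : E ≃ₗᵢ[ℝ] E) (hC : Function.Involutive C) {d k : ℕ}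
    (hd : finrank ℝ E = d)
    (hk : finrank ℝ (ker (C.toLinearEquiv.toLinearMap - LinearMap.id)) = k)
    (hcount : G.edgeFinset.card + 2 * ((k + 1).choose 2 + (d - k).choose 2) < d * Fintype.card V)
    (σ : G ≃g G) (hσ : Function.Involutive σ) (hvertex : ∀ i, σ i ≠ i)
    (hedge : ∀ e ∈ G.edgeSet, Sym2.map σ e ≠ e)
    (p : V → E) (hsym : ∀ i, C (p i) = p (σ i)) :
    ∃ u : V → E,
      (∀ i, C (u i) = u (σ i)) ∧
      (∀ i j, G.Adj i j → ⟪p i - p j, u i - u j⟫ = 0) ∧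
      ¬ ∃ A ∈ skewAdjoint (End ℝ E), ∃ t : E, ∀ i, u i = A (p i) + t := by
  subst hd hk
  set F := ker (C.toLinearEquiv.toLinearMap - LinearMap.id)
  have hmotions := card_mul_finrank_le_card_edgeSet_add_two_mul_finrank_symmetricMotions hC hσ
    hvertex (fun e h ↦ hedge e e.2 (congrArg Subtype.val h)) hsym
  have hrigid := finrank_rigidMotionsPreserving_le p F
  have hlt : finrank ℝ (rigidMotionsPreserving p F) < finrank ℝ (symmetricMotions G p C σ) := by
    rw [SimpleGraph.edgeFinset_card, mul_comm] at hcount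
    lia
  obtain ⟨u, ⟨husym, humotion⟩, hu⟩ :=
    SetLike.not_le_iff_exists.1 fun hle ↦ hlt.not_ge (Submodule.finrank_mono hle)
  refine ⟨u, husym, mem_ker_rigidityMap.1 humotion, ?_⟩
  rintro ⟨A, hA, t, hAt⟩
  exact hu (mem_rigidMotionsPreserving_of_mem_equivariantMaps hC hsym husym hA hAt)

end Frameworks

theorem toEuclideanLin_mem_skewAdjoint {n : Type*} [Fintype n] [DecidableEq n]
    {A : Matrix n n ℝ} (hA : A.transpose = -A) :
    Matrix.toEuclideanLin A ∈ skewAdjoint (End ℝ (EuclideanSpace ℝ n)) := by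
  rw [skewAdjoint.mem_iff, star_eq_adjoint, ← Matrix.toEuclideanLin_conjTranspose_eq_adjoint,
    Matrix.conjTranspose_eq_transpose_of_trivial, hA, map_neg]

/-- infinitesimal form of Theorem 6.6: with half-turn symmetry
in 3-space, no fixed vertex and no fixed edge, and `|E| = 3|V| - 6`, every
symmetric framework whose points span `ℝ³` has a fully symmetric infinitesimal
flex. -/
theorem stmt_11 {V : Type*} [Fintype V] [DecidableEq V]
    (G : SimpleGraph V) [DecidableRel G.Adj]
    (hcount : G.edgeFinset.card + 6 = 3 * Fintype.card V)
    (C : Euc 3 ≃ₗᵢ[ℝ] Euc 3) (hC2 : ∀ v, C (C v) = v)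
    (hdet : LinearMap.det (C.toLinearEquiv.toLinearMap) = 1)
    (hhalf : Module.finrank ℝ (fixedSpace C) = 1)
    (σ : Equiv.Perm V) (hσ2 : σ * σ = 1)
    (hσadj : ∀ i j : V, G.Adj (σ i) (σ j) ↔ G.Adj i j)
    (hnofixv : ∀ i : V, σ i ≠ i)
    (hnofixe : ∀ e ∈ G.edgeSet, Sym2.map σ e ≠ e)
    (p : V → Euc 3) (hp : Function.Injective p)
    (hsym : ∀ i, C (p i) = p (σ i))
    (hspan : affineSpan ℝ (Set.range p) = ⊤) :
    ∃ u : V → Euc 3,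
      (∀ i, C (u i) = u (σ i)) ∧
      (∀ i j : V, G.Adj i j → (inner ℝ (p i - p j) (u i - u j) : ℝ) = 0) ∧
      ¬ (∃ A : Matrix (Fin 3) (Fin 3) ℝ, Matrix.transpose A = -A ∧
        ∃ t : Euc 3, ∀ i, u i = Matrix.toEuclideanLin A (p i) + t) := by
  obtain ⟨u, husym, humotion, hu⟩ := stmt_11_general G C hC2 finrank_euclideanSpace_fin hhalf
    (by simp only [Nat.choose]; lia) ⟨σ, hσadj _ _⟩ (Equiv.ext_iff.1 hσ2) hnofixv hnofixe p hsym
  exact ⟨u, husym, humotion,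
    fun ⟨A, hA, t, hAt⟩ ↦ hu ⟨_, toEuclideanLin_mem_skewAdjoint hA, t, hAt⟩⟩
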